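/- Let T ≥ 1 and L be natural numbers, let y : ZMod T → ℝ, and for each channel l = 0,…,L−1 let x_l : ZMod T → ℝ and ω_l : ZMod T → ℝ. Then T · Σ_{i ∈ ZMod T} ( y(i) − Σ_{l=0}^{L−1} Σ_{j ∈ ZMod T} ω_l(j) · x_l(j + i) )² = Σ_{k ∈ ZMod T} ‖ ŷ(k) − Σ_{l=0}^{L−1} x̂_l(k) · conj(ω̂_l(k)) ‖², where ·̂ denotes the discrete Fourier transform of the complexification and ‖·‖ the complex modulus. In particular, the spatial-domain least-squares data term of the multi-channel correlation filter equals (1/T) times the corresponding frequency-domain squared norm (Parseval's equation). -/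

import Mathlib

/-!
The residual `r i = y i - ∑ l, ∑ j, ω l j * x l (j + i)` is a real signal whose discrete Fourier
transform is `ŷ - ∑ l, x̂ l * conj (ω̂ l)`, by linearity and the cross-correlation theorem
(`dft_crossCorrelation`). The claim is then Parseval's identity
`T * ∑ ‖r i‖² = ∑ ‖r̂ k‖²` (`sum_norm_sq_dft`), which follows from Fourier inversion.
-/

open scoped ComplexConjugate

lemma conj_stdAddChar {T : ℕ} [NeZero T] (a : ZMod T) :
    conj (ZMod.stdAddChar a : ℂ) = ZMod.stdAddChar (-a) :=
  (AddChar.map_neg_eq_conj _ _).symm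

/-- Parseval's identity for `ZMod.dft`. Expanding one factor `conj (f̂ k)` and summing over `k`
first turns the right-hand side into a double transform, which `ZMod.dft_dft` evaluates. -/
lemma sum_norm_sq_dft {T : ℕ} [NeZero T] (f : ZMod T → ℂ) :
    (T : ℝ) * ∑ i, ‖f i‖ ^ 2 = ∑ k, ‖ZMod.dft f k‖ ^ 2 := by
  have key : ∑ k, conj (ZMod.dft f k) * ZMod.dft f k = ∑ j, conj (f j) * (T * f j) := by
    calc ∑ k, conj (ZMod.dft f k) * ZMod.dft f k
        = ∑ k, ∑ j, conj (f j) * (ZMod.stdAddChar (-(k * -j)) * ZMod.dft f k) := by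
          refine Finset.sum_congr rfl fun k _ => ?_
          conv_lhs => rw [ZMod.dft_apply f k, map_sum, Finset.sum_mul]
          refine Finset.sum_congr rfl fun j _ => ?_
          rw [smul_eq_mul, map_mul, conj_stdAddChar,
            show -(k * -j) = - -(j * k) by ring, ← ZMod.dft_apply f k]
          ring
      _ = ∑ j, conj (f j) * ZMod.dft (ZMod.dft f) (-j) := by
          rw [Finset.sum_comm]
          refine Finset.sum_congr rfl fun j _ => ?_
          rw [ZMod.dft_apply (ZMod.dft f), Finset.mul_sum]
          simp only [smul_eq_mul]
      _ = ∑ j, conj (f j) * (T * f j) := by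
          simp [ZMod.dft_dft]
  apply Complex.ofReal_injective
  push_cast
  simp only [← Complex.conj_mul']
  rw [key, Finset.mul_sum]
  exact Finset.sum_congr rfl fun j _ => by ring

/-- Cross-correlation theorem: since `i = (j + i) - j`, the character splits as
`e(-ik) = e(-(j + i)k) * conj (e(-jk))`. -/
lemma dft_crossCorrelation {T : ℕ} [NeZero T] (w x : ZMod T → ℂ) (k : ZMod T) :
    ZMod.dft (fun i => ∑ j, conj (w j) * x (j + i)) k =
      ZMod.dft x k * conj (ZMod.dft w k) := by
  simp only [ZMod.dft_apply, smul_eq_mul, map_sum, map_mul, conj_stdAddChar, Finset.mul_sum]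
  rw [Finset.sum_comm]
  refine Finset.sum_congr rfl fun j _ => ?_
  conv_rhs => rw [Finset.sum_mul, ← Equiv.sum_comp (Equiv.addLeft j)]
  refine Finset.sum_congr rfl fun i _ => ?_
  rw [Equiv.coe_addLeft, show -(i * k) = -((j + i) * k) + - -(j * k) by ring,
    AddChar.map_add_eq_mul]
  ring

theorem parseval_multichannel_cf_loss (T L : ℕ) [NeZero T]
    (y : ZMod T → ℝ) (x ω : Fin L → ZMod T → ℝ) :
    (T : ℝ) *
        ∑ i : ZMod T,
          (y i - ∑ l : Fin L, ∑ j : ZMod T, ω l j * x l (j + i)) ^ 2 =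
      ∑ k : ZMod T,
        ‖ZMod.dft (fun j => (y j : ℂ)) k -
            ∑ l : Fin L,
              ZMod.dft (fun j => (x l j : ℂ)) k *
                conj (ZMod.dft (fun j => (ω l j : ℂ)) k)‖ ^ 2 := by
  have hr : (fun i => ((y i - ∑ l, ∑ j, ω l j * x l (j + i) : ℝ) : ℂ)) =
      (fun i => (y i : ℂ)) -
        ∑ l, fun i => ∑ j, conj (ω l j : ℂ) * (x l (j + i) : ℂ) := by
    ext i
    simp [Finset.sum_apply]
  have h := sum_norm_sq_dft (fun i => ((y i - ∑ l, ∑ j, ω l j * x l (j + i) : ℝ) : ℂ))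
  rw [hr] at h
  simp only [map_sub, map_sum, Pi.sub_apply, Finset.sum_apply] at h
  simp only [← dft_crossCorrelation]
  rw [← h]
  congr 1
  refine Finset.sum_congr rfl fun i _ => ?_
  rw [← sq_abs, ← Real.norm_eq_abs, ← Complex.norm_real]
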